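/- Let Ω be a connected open subset of ℝ^k. For each n ∈ ℕ ∪ {0}, let g_n : Ω → Sym(k) be a smooth map taking values in positive definite symmetric k×k matrices (a smooth Riemannian metric on Ω), and suppose g_n → g_0 smoothly over Ω (all partial derivatives of every order converge locally uniformly). For each n define the Laplacian Δ_n f := ∑_{i,j} (g_n^{−1})^{ij} ∂_i∂_j f − ∑_{i,j,m} (g_n^{−1})^{ij} (Γ_n)^m_{ij} ∂_m f, where (Γ_n)^m_{ij} := (1/2)·∑_l (g_n^{−1})^{ml}(∂_i (g_n)_{jl} + ∂_j (g_n)_{il} − ∂_l (g_n)_{ij}) are the Christoffel symbols. Let b_n : Ω → ℝ^k be smooth vector fields with b_n → b_0 smoothly over Ω, and let c > 0 and α > 0 be real numbers. For each n ∈ ℕ let f_n : Ω → (0,∞) be a smooth positive function satisfying Δ_n f_n^α + ⟨b_n, d f_n^α⟩ − c·f_n^α ≤ 0 pointwise on Ω, where ⟨b_n, d f_n^α⟩ denotes the derivative of f_n^α in the direction b_n. Suppose the sequence (f_n) converges smoothly over Ω to a function f_0 : Ω → [0,∞). If f_0(p) = 0 for some p ∈ Ω, then f_0 vanishes identically on Ω.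 -/

import Mathlib

/-!
The theorem is a strong maximum principle for a sequence of operators whose coefficients converge,
applied to `u_n = f_n ^ α`. It suffices to show that the zero set of `f0` is open, as it is also
closed in the connected set `Ω`.

Let `f0 x₀ = 0` and suppose `f0 a > 0` for some `a` so close to `x₀` that a Euclidean ball of radius
`R` about `a` lies in `Ω` and contains `x₀` in its interior. Uniform convergence gives `δ > 0` with
`f_n ≥ δ` near `a` for all large `n`. Let
`ψ(y) = δ ^ α * (exp (-lam |y - a|²) - exp (-lam R²))`, which is positive inside the ball, zero on its
boundary, and at most `δ ^ α`. The Laplacian with drift of `ψ` equals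
`δ ^ α * exp (-lam |y - a|²) * (4 lam² Q_n - 2 lam L_n)` (`laplacianOf_barrier`), where
`Q_n = ∑ (g_n⁻¹)^{ij} (y - a)_i (y - a)_j` and `L_n` (`linTerm`) does not involve `lam`. On the annulus
between the two balls, convergence of the coefficients and compactness bound `Q_n` below by a
positive constant and `L_n` above, uniformly in large `n` (`exists_uniform_bounds`), so a single
large `lam` makes `ψ` a strict subsolution for all these `n` (`exists_barrier_exponent`). The weak
maximum principle (`barrier_le_of_supersolution`), which rests on the second order condition at a
local minimum, yields `u_n ≥ ψ` on the ball. Evaluating at `x₀` and letting `n → ∞` gives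
`0 = f0 x₀ ^ α ≥ ψ x₀ > 0`, a contradiction.
-/

open Filter

/-- The partial derivative `∂ᵢ f` of a function `f : ℝ^k → ℝ`. -/
noncomputable def partialDeriv' {k : ℕ} (i : Fin k) (f : (Fin k → ℝ) → ℝ) :
    (Fin k → ℝ) → ℝ :=
  fun x => fderiv ℝ f x (Pi.single i 1)

/-- Iterated partial derivative with respect to a multi-index (a list of coordinate
directions). -/
noncomputable def iterPartialDeriv {k : ℕ} (l : List (Fin k)) (f : (Fin k → ℝ) → ℝ) :
    (Fin k → ℝ) → ℝ :=
  l.foldr partialDeriv' f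

/-- A sequence of functions converges smoothly (C^∞) over `Ω` to a limit function if,
for every multi-index, the corresponding iterated partial derivatives converge locally
uniformly on `Ω`. -/
def SmoothConvOn {k : ℕ} (Ω : Set (Fin k → ℝ)) (F : ℕ → (Fin k → ℝ) → ℝ)
    (f : (Fin k → ℝ) → ℝ) : Prop :=
  ∀ l : List (Fin k),
    TendstoLocallyUniformlyOn (fun n => iterPartialDeriv l (F n)) (iterPartialDeriv l f)
      atTop Ω

/-- The Christoffel symbols `Γ^m_{ij} = (1/2) ∑ l (g⁻¹)^{ml} (∂ᵢ g_{jl} + ∂ⱼ g_{il} - ∂_l g_{ij})`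
of a Riemannian metric `g` on an open subset of `ℝ^k`. -/
noncomputable def christoffel {k : ℕ} (g : (Fin k → ℝ) → Matrix (Fin k) (Fin k) ℝ)
    (m i j : Fin k) (x : Fin k → ℝ) : ℝ :=
  (1 / 2) * ∑ l, (g x)⁻¹ m l *
    (partialDeriv' i (fun y => g y j l) x + partialDeriv' j (fun y => g y i l) x
      - partialDeriv' l (fun y => g y i j) x)

/-- The Laplacian `Δf = ∑_{i,j} (g⁻¹)^{ij} ∂ᵢ∂ⱼ f - ∑_{i,j,m} (g⁻¹)^{ij} Γ^m_{ij} ∂_m f`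
associated to a Riemannian metric `g` on an open subset of `ℝ^k`. -/
noncomputable def laplacianOf {k : ℕ} (g : (Fin k → ℝ) → Matrix (Fin k) (Fin k) ℝ)
    (f : (Fin k → ℝ) → ℝ) (x : Fin k → ℝ) : ℝ :=
  (∑ i, ∑ j, (g x)⁻¹ i j * partialDeriv' i (partialDeriv' j f) x)
    - ∑ i, ∑ j, ∑ m, (g x)⁻¹ i j * christoffel g m i j x * partialDeriv' m f x

section MaximumPrinciple

open scoped Topology Matrix

/-! ### Second order conditions at a local minimum -/

/-- The necessary second order condition at a local minimum, obtained by restricting `v` to the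
line through `x` in the direction `ξ`. -/
theorem hessian_nonneg_of_isLocalMin {E : Type*} [NormedAddCommGroup E] [NormedSpace ℝ E]
    {v : E → ℝ} {x : E} (hv : ContDiffAt ℝ 2 v x) (hmin : IsLocalMin v x) (ξ : E) :
    0 ≤ fderiv ℝ (fderiv ℝ v) x ξ ξ := by
  have hline : ∀ t : ℝ, HasDerivAt (fun t : ℝ => x + t • ξ) ξ t := fun t => by
    simpa using ((hasDerivAt_id t).smul_const ξ).const_add x
  have hx0 : x + (0 : ℝ) • ξ = x := by simp
  have hlim : Tendsto (fun t : ℝ => x + t • ξ) (𝓝 0) (𝓝 x) := by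
    have := (hline 0).continuousAt.tendsto
    rwa [hx0] at this
  set φ : ℝ → ℝ := fun t => v (x + t • ξ) with hφ
  have hd1 : deriv φ =ᶠ[𝓝 0] fun t => fderiv ℝ v (x + t • ξ) ξ := by
    filter_upwards [hlim.eventually (hv.eventually (by simp))] with t ht
    exact ((ht.differentiableAt (by simp)).hasFDerivAt.comp_hasDerivAt t (hline t)).deriv
  have hD : HasFDerivAt (fderiv ℝ v) (fderiv ℝ (fderiv ℝ v) x) (x + (0 : ℝ) • ξ) := by
    rw [hx0]
    exact ((hv.fderiv_right (m := 1) (by norm_num)).differentiableAt (by simp)).hasFDerivAt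
  have hd2 : deriv (deriv φ) 0 = fderiv ℝ (fderiv ℝ v) x ξ ξ := by
    rw [hd1.deriv_eq]
    have h1 : HasDerivAt (fun t : ℝ => fderiv ℝ v (x + t • ξ)) (fderiv ℝ (fderiv ℝ v) x ξ) 0 :=
      hD.comp_hasDerivAt (0 : ℝ) (hline 0)
    have h2 := h1.clm_apply (hasDerivAt_const (0 : ℝ) ξ)
    rw [h2.deriv, map_zero, add_zero]
  have hφmin : IsLocalMin φ 0 := by
    have : ∀ᶠ t in 𝓝 (0 : ℝ), v x ≤ v (x + t • ξ) := hlim.eventually hmin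
    simpa [IsLocalMin, IsMinFilter, hφ] using this
  have hφc : ContinuousAt φ 0 :=
    ContinuousAt.comp (g := v) (f := fun t : ℝ => x + t • ξ) (by rw [hx0]; exact hv.continuousAt)
      (hline 0).continuousAt
  by_contra! hneg
  rw [← hd2] at hneg
  -- A strictly negative second derivative makes `0` a local maximum as well, so that `φ` is
  -- locally constant and its second derivative vanishes.
  have hφmax := isLocalMax_of_deriv_deriv_neg hneg hφmin.deriv_eq_zero hφc
  have hconst : φ =ᶠ[𝓝 0] fun _ => φ 0 := by
    filter_upwards [hφmin, hφmax] with t h1 h2 using le_antisymm h2 h1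
  have h0 : deriv (deriv φ) 0 = 0 := by
    rw [hconst.deriv.deriv_eq]; simp
  exact hneg.ne h0

theorem partialDeriv'_partialDeriv' {k : ℕ} {v : (Fin k → ℝ) → ℝ} {x : Fin k → ℝ}
    (hv : ContDiffAt ℝ 2 v x) (i j : Fin k) :
    partialDeriv' i (partialDeriv' j v) x
      = fderiv ℝ (fderiv ℝ v) x (Pi.single i 1) (Pi.single j 1) := by
  have h := ((hv.fderiv_right (m := 1) (by norm_num)).differentiableAt (by simp)).hasFDerivAt
  have := (h.clm_apply (hasFDerivAt_const (Pi.single j (1 : ℝ)) x)).fderiv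
  unfold partialDeriv'
  rw [this]
  simp

/-- `tr (A · Hess v) ≥ 0` at a local minimum: writing `A = Cᵀ C`, the trace is the sum of the values
of the Hessian on the rows of `C`. -/
theorem sum_mul_hessian_nonneg {k : ℕ} {A : Matrix (Fin k) (Fin k) ℝ} (hA : A.PosSemidef)
    {v : (Fin k → ℝ) → ℝ} {x : Fin k → ℝ}
    (hv : ContDiffAt ℝ 2 v x) (hmin : IsLocalMin v x) :
    0 ≤ ∑ i, ∑ j, A i j * fderiv ℝ (fderiv ℝ v) x (Pi.single i 1) (Pi.single j 1) := by
  obtain ⟨C, hC⟩ : ∃ C : Matrix (Fin k) (Fin k) ℝ, A = star C * C := by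
    open MatrixOrder in exact CStarAlgebra.nonneg_iff_eq_star_mul_self.mp hA.nonneg
  set H := fderiv ℝ (fderiv ℝ v) x
  have key : ∑ i, ∑ j, A i j * H (Pi.single i 1) (Pi.single j 1) = ∑ l, H (C l) (C l) := by
    have hrow : ∀ l, H (C l) (C l)
        = ∑ i, ∑ j, C l i * C l j * H (Pi.single i 1) (Pi.single j 1) := fun l => by
      conv_lhs => rw [pi_eq_sum_univ' (C l)]
      simp only [map_sum, map_smul, sum_apply, smul_apply,
        smul_eq_mul, Finset.mul_sum]
      refine (Finset.sum_comm).trans ?_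
      refine Finset.sum_congr rfl fun i _ => Finset.sum_congr rfl fun j _ => ?_
      ring
    simp only [hrow]
    refine Eq.trans ?_ Finset.sum_comm
    refine Finset.sum_congr rfl fun i _ => ?_
    refine Eq.trans ?_ Finset.sum_comm
    refine Finset.sum_congr rfl fun j _ => ?_
    rw [hC, Matrix.mul_apply, Finset.sum_mul]
    simp [Matrix.star_apply]
  rw [key]
  exact Finset.sum_nonneg fun l _ => hessian_nonneg_of_isLocalMin hv hmin (C l)

/-- Comparison at a touching point: where `u - ψ` has a local minimum the gradients agree and the
Hessians are ordered, so the Laplacian with drift of `ψ` is at most that of `u`. -/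
theorem laplacianOf_add_le_of_isLocalMin_sub {k : ℕ}
    {g : (Fin k → ℝ) → Matrix (Fin k) (Fin k) ℝ} {u ψ : (Fin k → ℝ) → ℝ} {x : Fin k → ℝ}
    (hg : (g x).PosDef) (hu : ContDiffAt ℝ 2 u x) (hψ : ContDiffAt ℝ 2 ψ x)
    (hmin : IsLocalMin (u - ψ) x) (w : Fin k → ℝ) :
    laplacianOf g ψ x + fderiv ℝ ψ x w ≤ laplacianOf g u x + fderiv ℝ u x w := by
  have hgrad : fderiv ℝ u x = fderiv ℝ ψ x := by
    have := hmin.fderiv_eq_zero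
    rw [fderiv_sub (hu.differentiableAt (by simp)) (hψ.differentiableAt (by simp))] at this
    exact sub_eq_zero.mp this
  have hev : fderiv ℝ (u - ψ) =ᶠ[𝓝 x] fderiv ℝ u - fderiv ℝ ψ := by
    filter_upwards [hu.eventually (by simp), hψ.eventually (by simp)] with y h1 h2
    exact fderiv_sub (h1.differentiableAt (by simp)) (h2.differentiableAt (by simp))
  have hhess : fderiv ℝ (fderiv ℝ (u - ψ)) x
      = fderiv ℝ (fderiv ℝ u) x - fderiv ℝ (fderiv ℝ ψ) x := by
    rw [hev.fderiv_eq]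
    exact fderiv_sub ((hu.fderiv_right (m := 1) (by norm_num)).differentiableAt (by simp))
      ((hψ.fderiv_right (m := 1) (by norm_num)).differentiableAt (by simp))
  have hnn := sum_mul_hessian_nonneg (v := u - ψ) hg.inv.posSemidef (hu.sub hψ) hmin
  rw [hhess] at hnn
  simp only [sub_apply, mul_sub, Finset.sum_sub_distrib] at hnn
  unfold laplacianOf
  simp only [partialDeriv'_partialDeriv' hu, partialDeriv'_partialDeriv' hψ]
  simp only [partialDeriv', hgrad]
  linarith

/-! ### The barrier -/

/-- The squared Euclidean distance between two points of `Fin k → ℝ`, whose own metric comes from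
the sup norm and is not smooth. -/
def sqDist {k : ℕ} (a y : Fin k → ℝ) : ℝ := ∑ i, (y i - a i) ^ 2

/-- The Hopf barrier `ε (exp (-lam |y - a|²) - κ)` centred at `a`, with `|·|` the Euclidean norm.
For `ε, lam > 0` and `κ = exp (-lam R²)` it is positive inside the Euclidean ball of radius `R` and vanishes on its
boundary. -/
noncomputable def barrier {k : ℕ} (ε lam κ : ℝ) (a y : Fin k → ℝ) : ℝ :=
  ε * (Real.exp (-lam * sqDist a y) - κ)

theorem contDiff_sqDist {k : ℕ} (a : Fin k → ℝ) : ContDiff ℝ (⊤ : ℕ∞) (sqDist a) := by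
  unfold sqDist; fun_prop

theorem contDiff_barrier {k : ℕ} (ε lam κ : ℝ) (a : Fin k → ℝ) :
    ContDiff ℝ (⊤ : ℕ∞) (barrier ε lam κ a) := by
  unfold barrier
  have := contDiff_sqDist a
  fun_prop

theorem hasFDerivAt_sqDist {k : ℕ} (a y : Fin k → ℝ) :
    HasFDerivAt (sqDist a)
      (∑ i, (2 * (y i - a i)) • ContinuousLinearMap.proj (R := ℝ) (φ := fun _ : Fin k => ℝ) i) y := by
  unfold sqDist
  refine HasFDerivAt.fun_sum fun i _ => ?_
  have := ((hasFDerivAt_apply (𝕜 := ℝ) i y).sub_const (a i)).pow 2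
  simpa using this

theorem fderiv_barrier {k : ℕ} (ε lam κ : ℝ) (a y w : Fin k → ℝ) :
    fderiv ℝ (barrier ε lam κ a) y w
      = ε * Real.exp (-lam * sqDist a y) * (-2 * lam * ∑ i, (y i - a i) * w i) := by
  have h := ((((hasFDerivAt_sqDist a y).const_mul (-lam)).exp).sub_const κ).const_mul ε
  have h' : HasFDerivAt (barrier ε lam κ a) _ y := h
  rw [h'.fderiv]
  simp [Finset.mul_sum]
  refine Finset.sum_congr rfl fun i _ => ?_
  ring

theorem partialDeriv'_barrier {k : ℕ} (ε lam κ : ℝ) (a y : Fin k → ℝ) (j : Fin k) :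
    partialDeriv' j (barrier ε lam κ a) y
      = ε * Real.exp (-lam * sqDist a y) * (-2 * lam * (y j - a j)) := by
  rw [partialDeriv', fderiv_barrier]
  simp [Pi.single_apply]

theorem partialDeriv'_partialDeriv'_barrier {k : ℕ} (ε lam κ : ℝ) (a y : Fin k → ℝ)
    (i j : Fin k) :
    partialDeriv' i (partialDeriv' j (barrier ε lam κ a)) y
      = ε * Real.exp (-lam * sqDist a y) *
        (4 * lam ^ 2 * ((y i - a i) * (y j - a j)) - 2 * lam * (1 : Matrix (Fin k) (Fin k) ℝ) i j) := by
  have heq : partialDeriv' j (barrier ε lam κ a)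
      = fun z => barrier ε lam 0 a z * (-2 * lam * (z j - a j)) := by
    funext z
    rw [partialDeriv'_barrier, barrier, sub_zero]
  have h1 := (((contDiff_barrier ε lam 0 a).differentiable (by simp)) y).hasFDerivAt
  have h2 := ((hasFDerivAt_apply (𝕜 := ℝ) j y).sub_const (a j)).const_mul (-2 * lam)
  rw [heq, partialDeriv', (h1.fun_mul h2).fderiv]
  simp only [add_apply, smul_apply, smul_eq_mul,
    ContinuousLinearMap.proj_apply]
  have := partialDeriv'_barrier ε lam 0 a y i
  rw [partialDeriv'] at this
  rw [this, barrier, sub_zero, Matrix.one_apply, Pi.single_apply]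
  simp only [eq_comm (a := j)]
  ring

/-- The quadratic form `∑ (g⁻¹)^{ij} (y - a)_i (y - a)_j`, the leading coefficient (up to the factor
`4 lam²`) in the Laplacian of the barrier. -/
noncomputable def quadTerm {k : ℕ} (g : (Fin k → ℝ) → Matrix (Fin k) (Fin k) ℝ)
    (a y : Fin k → ℝ) : ℝ :=
  ∑ i, ∑ j, (g y)⁻¹ i j * ((y i - a i) * (y j - a j))

/-- The quantity `tr g⁻¹ - ∑ (g⁻¹)^{ij} Γ^m_{ij} (y - a)_m + ⟨b, y - a⟩`, the coefficient of
`-2 lam` in the Laplacian with drift of the barrier. The trace is written with the identity matrix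
as Kronecker delta. -/
noncomputable def linTerm {k : ℕ} (g : (Fin k → ℝ) → Matrix (Fin k) (Fin k) ℝ)
    (b : (Fin k → ℝ) → (Fin k → ℝ)) (a y : Fin k → ℝ) : ℝ :=
  (∑ i, ∑ j, (g y)⁻¹ i j * (1 : Matrix (Fin k) (Fin k) ℝ) i j)
    - (∑ i, ∑ j, ∑ m, (g y)⁻¹ i j * christoffel g m i j y * (y m - a m))
    + ∑ i, (y i - a i) * b y i

theorem laplacianOf_barrier {k : ℕ} (g : (Fin k → ℝ) → Matrix (Fin k) (Fin k) ℝ)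
    (b : (Fin k → ℝ) → (Fin k → ℝ)) (ε lam κ : ℝ) (a y : Fin k → ℝ) :
    laplacianOf g (barrier ε lam κ a) y + fderiv ℝ (barrier ε lam κ a) y (b y)
      = ε * Real.exp (-lam * sqDist a y) *
        (4 * lam ^ 2 * quadTerm g a y - 2 * lam * linTerm g b a y) := by
  unfold laplacianOf
  simp only [partialDeriv'_partialDeriv'_barrier, partialDeriv'_barrier, fderiv_barrier]
  set e := ε * Real.exp (-lam * sqDist a y)
  have h1 : ∑ i, ∑ j, (g y)⁻¹ i j * (e * (4 * lam ^ 2 * ((y i - a i) * (y j - a j))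
        - 2 * lam * (1 : Matrix (Fin k) (Fin k) ℝ) i j))
      = e * (4 * lam ^ 2) * quadTerm g a y
        - e * (2 * lam) * ∑ i, ∑ j, (g y)⁻¹ i j * (1 : Matrix (Fin k) (Fin k) ℝ) i j := by
    simp only [quadTerm, Finset.mul_sum, ← Finset.sum_sub_distrib]
    refine Finset.sum_congr rfl fun i _ => Finset.sum_congr rfl fun j _ => ?_
    ring
  have h2 : ∑ i, ∑ j, ∑ m, (g y)⁻¹ i j * christoffel g m i j y * (e * (-2 * lam * (y m - a m)))
      = -(e * (2 * lam)) *
        ∑ i, ∑ j, ∑ m, (g y)⁻¹ i j * christoffel g m i j y * (y m - a m) := by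
    simp only [Finset.mul_sum]
    refine Finset.sum_congr rfl fun i _ => Finset.sum_congr rfl fun j _ =>
      Finset.sum_congr rfl fun m _ => ?_
    ring
  rw [h1, h2, linTerm]
  ring

/-! ### Euclidean balls -/

theorem sqDist_nonneg {k : ℕ} (a y : Fin k → ℝ) : 0 ≤ sqDist a y :=
  Finset.sum_nonneg fun _ _ => sq_nonneg _

theorem sq_dist_le_sqDist {k : ℕ} (a y : Fin k → ℝ) : dist y a ^ 2 ≤ sqDist a y := by
  have h : dist y a ≤ √(sqDist a y) := by
    refine (dist_pi_le_iff (Real.sqrt_nonneg _)).2 fun i => ?_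
    rw [Real.dist_eq, ← Real.sqrt_sq_eq_abs]
    exact Real.sqrt_le_sqrt
      (Finset.single_le_sum (f := fun i => (y i - a i) ^ 2) (fun _ _ => sq_nonneg _)
        (Finset.mem_univ i))
  calc dist y a ^ 2 ≤ √(sqDist a y) ^ 2 := by gcongr
    _ = sqDist a y := Real.sq_sqrt (sqDist_nonneg a y)

theorem dist_le_of_sqDist_le {k : ℕ} {a y : Fin k → ℝ} {R : ℝ} (hR : 0 ≤ R)
    (h : sqDist a y ≤ R ^ 2) : dist y a ≤ R :=
  (sq_le_sq₀ dist_nonneg hR).1 ((sq_dist_le_sqDist a y).trans h)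

theorem sqDist_le_mul_sq_dist {k : ℕ} (a y : Fin k → ℝ) : sqDist a y ≤ k * dist y a ^ 2 := by
  have : ∀ i ∈ Finset.univ, (y i - a i) ^ 2 ≤ dist y a ^ 2 := fun i _ => by
    rw [← sq_abs, ← Real.dist_eq]
    gcongr
    exact dist_le_pi_dist y a i
  simpa [sqDist] using Finset.sum_le_card_nsmul _ _ _ this

theorem isCompact_sqDist_le {k : ℕ} (a : Fin k → ℝ) {R : ℝ} (hR : 0 ≤ R) :
    IsCompact {y | sqDist a y ≤ R ^ 2} :=
  (isCompact_closedBall a R).of_isClosed_subset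
    (isClosed_le (contDiff_sqDist a).continuous continuous_const)
    fun _ hy => dist_le_of_sqDist_le hR hy

/-! ### Comparison with the barrier for a single operator -/

/-- Weak maximum principle: a positive supersolution `u` dominates the barrier on the ball of
radius `R` about `a`, provided `ε ≤ u` on the ball `|x - a|² < r` and the barrier is a strict
subsolution on the remaining annulus. At a negative minimum of `u - ψ`, which would have to lie in
the annulus, off the outer sphere, the comparison of the Laplacians contradicts `c > 0`. -/
theorem barrier_le_of_supersolution {k : ℕ} {Ω : Set (Fin k → ℝ)}
    {g : (Fin k → ℝ) → Matrix (Fin k) (Fin k) ℝ} {b : (Fin k → ℝ) → (Fin k → ℝ)}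
    {u : (Fin k → ℝ) → ℝ} {c ε lam r R : ℝ} {a : Fin k → ℝ}
    (hc : 0 < c) (hε : 0 < ε) (hlam : 0 < lam) (hR : 0 ≤ R)
    (hsub : {y | sqDist a y ≤ R ^ 2} ⊆ Ω)
    (hg : ∀ x ∈ Ω, (g x).PosDef) (hu : ∀ x ∈ Ω, ContDiffAt ℝ 2 u x)
    (hupos : ∀ x ∈ Ω, 0 < u x)
    (hineq : ∀ x ∈ Ω, laplacianOf g u x + fderiv ℝ u x (b x) - c * u x ≤ 0)
    (hinner : ∀ x ∈ Ω, sqDist a x < r → ε ≤ u x)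
    (hbar : ∀ x, r ≤ sqDist a x → sqDist a x ≤ R ^ 2 →
      0 < 4 * lam ^ 2 * quadTerm g a x - 2 * lam * linTerm g b a x - c)
    {x : Fin k → ℝ} (hx : sqDist a x ≤ R ^ 2) :
    barrier ε lam (Real.exp (-lam * R ^ 2)) a x ≤ u x := by
  set κ := Real.exp (-lam * R ^ 2) with hκ
  set ψ := barrier ε lam κ a with hψ
  have hψs : ContDiff ℝ (⊤ : ℕ∞) ψ := contDiff_barrier ε lam κ a
  have hcont : ContinuousOn (u - ψ) {y | sqDist a y ≤ R ^ 2} := fun y hy =>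
    ((hu y (hsub hy)).continuousAt.sub hψs.continuous.continuousAt).continuousWithinAt
  obtain ⟨z, hz, hzmin⟩ := (isCompact_sqDist_le a hR).exists_isMinOn ⟨x, hx⟩ hcont
  have hzΩ := hsub hz
  suffices h : 0 ≤ (u - ψ) z by
    have : (u - ψ) z ≤ (u - ψ) x := hzmin hx
    have h3 : 0 ≤ u x - ψ x := h.trans this
    linarith
  by_contra! hneg
  have hlt : u z < ψ z := by simpa using hneg
  -- On the small ball `ψ ≤ ε ≤ u`, and on the outer sphere `ψ = 0 < u`.
  have hzr : r ≤ sqDist a z := by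
    by_contra! hlt'
    have h1 := hinner z hzΩ hlt'
    have h2 : Real.exp (-lam * sqDist a z) ≤ 1 :=
      Real.exp_le_one_iff.2 (by nlinarith [sqDist_nonneg a z])
    have h3 : ψ z ≤ ε := by
      have : 0 < κ := Real.exp_pos _
      rw [hψ, barrier]
      nlinarith
    linarith
  have hzR : sqDist a z < R ^ 2 := by
    refine lt_of_le_of_ne hz fun heq => ?_
    have h1 : ψ z = 0 := by rw [hψ, barrier, heq, hκ, sub_self, mul_zero]
    linarith [hupos z hzΩ]
  have hnhds : {y | sqDist a y ≤ R ^ 2} ∈ 𝓝 z :=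
    mem_of_superset ((isOpen_lt (contDiff_sqDist a).continuous continuous_const).mem_nhds hzR)
      fun y hy => Set.mem_ofPred.2 (le_of_lt hy)
  have hcmp := laplacianOf_add_le_of_isLocalMin_sub (hg z hzΩ) (hu z hzΩ)
    (hψs.contDiffAt.of_le (WithTop.coe_le_coe.2 (le_top : (2 : ℕ∞) ≤ ⊤))) (hzmin.isLocalMin hnhds) (b z)
  rw [hψ, laplacianOf_barrier] at hcmp
  have h1 := hineq z hzΩ
  have hpos := mul_pos (mul_pos hε (Real.exp_pos (-lam * sqDist a z))) (hbar z hzr hz)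
  have h2 : ψ z ≤ ε * Real.exp (-lam * sqDist a z) := by
    have : 0 < κ := Real.exp_pos _
    rw [hψ, barrier]
    nlinarith
  nlinarith

/-! ### Uniform control of the coefficients -/

/-- Locally uniform convergence to a continuous limit, phrased as joint convergence as `n → ∞` and
the point tends to `x`. In this form it is stable under the algebraic operations that build the
coefficients of the Laplacian, matrix inversion included. -/
theorem tendsto_prod_of_tendstoLocallyUniformlyOn {k : ℕ} {Ω : Set (Fin k → ℝ)}
    (hΩ : IsOpen Ω) {F : ℕ → (Fin k → ℝ) → ℝ} {f : (Fin k → ℝ) → ℝ}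
    (h : TendstoLocallyUniformlyOn F f atTop Ω) (hf : ContinuousOn f Ω)
    {x : Fin k → ℝ} (hx : x ∈ Ω) :
    Tendsto (fun q : ℕ × (Fin k → ℝ) => F q.1 q.2) (atTop ×ˢ 𝓝 x) (𝓝 (f x)) := by
  refine tendsto_comp_of_locally_uniform_limit_within (s := Ω)
    (F := fun (q : ℕ × (Fin k → ℝ)) y => F q.1 y) (g := Prod.snd) (hf x hx) ?_ fun u hu => ?_
  · rw [hΩ.nhdsWithin_eq hx]
    exact tendsto_snd
  · obtain ⟨t, ht, hev⟩ := h u hu x hx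
    exact ⟨t, ht, tendsto_fst.eventually hev⟩

theorem tendsto_matrix_inv_apply {k : ℕ} {ι : Type*} {l : Filter ι}
    {G : ι → Matrix (Fin k) (Fin k) ℝ} {A : Matrix (Fin k) (Fin k) ℝ} (hA : A.PosDef)
    (h : ∀ i j, Tendsto (fun q => G q i j) l (𝓝 (A i j))) (i j : Fin k) :
    Tendsto (fun q => (G q)⁻¹ i j) l (𝓝 (A⁻¹ i j)) := by
  have hG : Tendsto G l (𝓝 A) := tendsto_pi_nhds.2 fun i => tendsto_pi_nhds.2 fun j => h i j
  have hc : ContinuousAt Ring.inverse A.det := by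
    rw [Ring.inverse_eq_inv']
    exact continuousAt_inv₀ hA.det_pos.ne'
  have h1 : Tendsto (fun q => (G q)⁻¹) l (𝓝 A⁻¹) :=
    (continuousAt_matrix_inv A hc).tendsto.comp hG
  exact tendsto_pi_nhds.1 (tendsto_pi_nhds.1 h1 i) j

theorem continuousOn_partialDeriv' {k : ℕ} {Ω : Set (Fin k → ℝ)} (hΩ : IsOpen Ω)
    {f : (Fin k → ℝ) → ℝ} (hf : ContDiffOn ℝ (⊤ : ℕ∞) f Ω) (i : Fin k) :
    ContinuousOn (partialDeriv' i f) Ω :=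
  (hf.continuousOn_fderiv_of_isOpen hΩ (by exact_mod_cast le_top)).clm_apply continuousOn_const

section Limits

variable {k : ℕ} {Ω : Set (Fin k → ℝ)}
  {g : ℕ → (Fin k → ℝ) → Matrix (Fin k) (Fin k) ℝ}
  {g0 : (Fin k → ℝ) → Matrix (Fin k) (Fin k) ℝ}
  {b : ℕ → (Fin k → ℝ) → (Fin k → ℝ)} {b0 : (Fin k → ℝ) → (Fin k → ℝ)}

theorem SmoothConvOn.tendsto_prod (hΩ : IsOpen Ω) {F : ℕ → (Fin k → ℝ) → ℝ}
    {f : (Fin k → ℝ) → ℝ} (h : SmoothConvOn Ω F f) (hf : ContinuousOn f Ω) {x : Fin k → ℝ}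
    (hx : x ∈ Ω) :
    Tendsto (fun q : ℕ × (Fin k → ℝ) => F q.1 q.2) (atTop ×ˢ 𝓝 x) (𝓝 (f x)) :=
  tendsto_prod_of_tendstoLocallyUniformlyOn hΩ (h []) hf hx

theorem SmoothConvOn.tendsto_prod_partialDeriv' (hΩ : IsOpen Ω) {F : ℕ → (Fin k → ℝ) → ℝ}
    {f : (Fin k → ℝ) → ℝ} (h : SmoothConvOn Ω F f) (hf : ContDiffOn ℝ (⊤ : ℕ∞) f Ω)
    {x : Fin k → ℝ} (hx : x ∈ Ω) (i : Fin k) :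
    Tendsto (fun q : ℕ × (Fin k → ℝ) => partialDeriv' i (F q.1) q.2) (atTop ×ˢ 𝓝 x)
      (𝓝 (partialDeriv' i f x)) :=
  tendsto_prod_of_tendstoLocallyUniformlyOn hΩ (h [i]) (continuousOn_partialDeriv' hΩ hf i) hx

theorem tendsto_inv_metric (hΩ : IsOpen Ω)
    (hg0smooth : ∀ i j, ContDiffOn ℝ (⊤ : ℕ∞) (fun x => g0 x i j) Ω)
    (hg0pos : ∀ x ∈ Ω, (g0 x).PosDef)
    (hgconv : ∀ i j, SmoothConvOn Ω (fun n x => g n x i j) (fun x => g0 x i j))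
    {x : Fin k → ℝ} (hx : x ∈ Ω) (i j : Fin k) :
    Tendsto (fun q : ℕ × (Fin k → ℝ) => (g q.1 q.2)⁻¹ i j) (atTop ×ˢ 𝓝 x)
      (𝓝 ((g0 x)⁻¹ i j)) :=
  tendsto_matrix_inv_apply (hg0pos x hx)
    (fun i j => (hgconv i j).tendsto_prod hΩ (hg0smooth i j).continuousOn hx) i j

theorem tendsto_christoffel (hΩ : IsOpen Ω)
    (hg0smooth : ∀ i j, ContDiffOn ℝ (⊤ : ℕ∞) (fun x => g0 x i j) Ω)
    (hg0pos : ∀ x ∈ Ω, (g0 x).PosDef)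
    (hgconv : ∀ i j, SmoothConvOn Ω (fun n x => g n x i j) (fun x => g0 x i j))
    {x : Fin k → ℝ} (hx : x ∈ Ω) (m i j : Fin k) :
    Tendsto (fun q : ℕ × (Fin k → ℝ) => christoffel (g q.1) m i j q.2) (atTop ×ˢ 𝓝 x)
      (𝓝 (christoffel g0 m i j x)) := by
  have hd : ∀ i j l, Tendsto (fun q : ℕ × (Fin k → ℝ) =>
      partialDeriv' l (fun y => g q.1 y i j) q.2) (atTop ×ˢ 𝓝 x)
      (𝓝 (partialDeriv' l (fun y => g0 y i j) x)) := fun i j l =>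
    (hgconv i j).tendsto_prod_partialDeriv' hΩ (hg0smooth i j) hx l
  refine Tendsto.const_mul _ (tendsto_finsetSum _ fun l _ => ?_)
  exact (tendsto_inv_metric hΩ hg0smooth hg0pos hgconv hx m l).mul
    (((hd j l i).add (hd i l j)).sub (hd i j l))

theorem tendsto_sub_apply (x a : Fin k → ℝ) (i : Fin k) :
    Tendsto (fun q : ℕ × (Fin k → ℝ) => q.2 i - a i) (atTop ×ˢ 𝓝 x) (𝓝 (x i - a i)) :=
  (((continuous_apply i).tendsto x).comp tendsto_snd).sub_const _

theorem tendsto_quadTerm (hΩ : IsOpen Ω)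
    (hg0smooth : ∀ i j, ContDiffOn ℝ (⊤ : ℕ∞) (fun x => g0 x i j) Ω)
    (hg0pos : ∀ x ∈ Ω, (g0 x).PosDef)
    (hgconv : ∀ i j, SmoothConvOn Ω (fun n x => g n x i j) (fun x => g0 x i j))
    (a : Fin k → ℝ) {x : Fin k → ℝ} (hx : x ∈ Ω) :
    Tendsto (fun q : ℕ × (Fin k → ℝ) => quadTerm (g q.1) a q.2) (atTop ×ˢ 𝓝 x)
      (𝓝 (quadTerm g0 a x)) :=
  tendsto_finsetSum _ fun i _ => tendsto_finsetSum _ fun j _ =>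
    (tendsto_inv_metric hΩ hg0smooth hg0pos hgconv hx i j).mul
      ((tendsto_sub_apply x a i).mul (tendsto_sub_apply x a j))

theorem tendsto_linTerm (hΩ : IsOpen Ω)
    (hg0smooth : ∀ i j, ContDiffOn ℝ (⊤ : ℕ∞) (fun x => g0 x i j) Ω)
    (hg0pos : ∀ x ∈ Ω, (g0 x).PosDef)
    (hgconv : ∀ i j, SmoothConvOn Ω (fun n x => g n x i j) (fun x => g0 x i j))
    (hb0smooth : ∀ i, ContDiffOn ℝ (⊤ : ℕ∞) (fun x => b0 x i) Ω)
    (hbconv : ∀ i, SmoothConvOn Ω (fun n x => b n x i) (fun x => b0 x i))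
    (a : Fin k → ℝ) {x : Fin k → ℝ} (hx : x ∈ Ω) :
    Tendsto (fun q : ℕ × (Fin k → ℝ) => linTerm (g q.1) (b q.1) a q.2) (atTop ×ˢ 𝓝 x)
      (𝓝 (linTerm g0 b0 a x)) := by
  have hinv := tendsto_inv_metric hΩ hg0smooth hg0pos hgconv hx
  refine Tendsto.add (Tendsto.sub ?_ ?_) ?_
  · exact tendsto_finsetSum _ fun i _ => tendsto_finsetSum _ fun j _ =>
      (hinv i j).mul tendsto_const_nhds
  · exact tendsto_finsetSum _ fun i _ => tendsto_finsetSum _ fun j _ =>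
      tendsto_finsetSum _ fun m _ =>
        ((hinv i j).mul (tendsto_christoffel hΩ hg0smooth hg0pos hgconv hx m i j)).mul
          (tendsto_sub_apply x a m)
  · exact tendsto_finsetSum _ fun i _ => (tendsto_sub_apply x a i).mul
      ((hbconv i).tendsto_prod hΩ (hb0smooth i).continuousOn hx)

theorem quadTerm_pos {g : (Fin k → ℝ) → Matrix (Fin k) (Fin k) ℝ} {a y : Fin k → ℝ}
    (hg : (g y).PosDef) (hne : y ≠ a) : 0 < quadTerm g a y := by
  have h := hg.inv.dotProduct_mulVec_pos (sub_ne_zero.2 hne)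
  refine h.trans_eq ?_
  simp only [quadTerm, dotProduct, Matrix.mulVec, Finset.mul_sum, star_trivial, Pi.sub_apply]
  refine Finset.sum_congr rfl fun i _ => Finset.sum_congr rfl fun j _ => ?_
  ring

/-- Away from the centre `a`, the quadratic term is bounded below and the linear term bounded above
on a compact set, uniformly for large `n`. Both bounds hold near each point by joint convergence,
and compactness makes them uniform. -/
theorem exists_uniform_bounds (hΩ : IsOpen Ω)
    (hg0smooth : ∀ i j, ContDiffOn ℝ (⊤ : ℕ∞) (fun x => g0 x i j) Ω)
    (hg0pos : ∀ x ∈ Ω, (g0 x).PosDef)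
    (hgconv : ∀ i j, SmoothConvOn Ω (fun n x => g n x i j) (fun x => g0 x i j))
    (hb0smooth : ∀ i, ContDiffOn ℝ (⊤ : ℕ∞) (fun x => b0 x i) Ω)
    (hbconv : ∀ i, SmoothConvOn Ω (fun n x => b n x i) (fun x => b0 x i))
    {K : Set (Fin k → ℝ)} (hK : IsCompact K) (hKΩ : K ⊆ Ω) {a : Fin k → ℝ} (ha : a ∉ K) :
    ∃ θ > 0, ∃ T, ∀ᶠ n in atTop, ∀ y ∈ K,
      θ < quadTerm (g n) a y ∧ linTerm (g n) (b n) a y < T := by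
  refine hK.induction_on
    (p := fun s => ∃ θ > 0, ∃ T, ∀ᶠ n in atTop, ∀ y ∈ s,
      θ < quadTerm (g n) a y ∧ linTerm (g n) (b n) a y < T) ?_ ?_ ?_ ?_
  · exact ⟨1, one_pos, 0, by simp⟩
  · rintro s t hst ⟨θ, hθ, T, h⟩
    exact ⟨θ, hθ, T, h.mono fun n hn y hy => hn y (hst hy)⟩
  · rintro s t ⟨θ₁, hθ₁, T₁, h₁⟩ ⟨θ₂, hθ₂, T₂, h₂⟩
    refine ⟨min θ₁ θ₂, lt_min hθ₁ hθ₂, max T₁ T₂, ?_⟩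
    filter_upwards [h₁, h₂] with n hn₁ hn₂ y hy
    rcases hy with hy | hy
    · exact ⟨(min_le_left _ _).trans_lt (hn₁ y hy).1, (hn₁ y hy).2.trans_le (le_max_left _ _)⟩
    · exact ⟨(min_le_right _ _).trans_lt (hn₂ y hy).1, (hn₂ y hy).2.trans_le (le_max_right _ _)⟩
  · intro x hx
    have hq : 0 < quadTerm g0 a x :=
      quadTerm_pos (hg0pos x (hKΩ hx)) fun h => ha (h ▸ hx)
    have h1 := (tendsto_quadTerm hΩ hg0smooth hg0pos hgconv a (hKΩ hx)).eventually_const_lt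
      (half_lt_self hq)
    have h2 := (tendsto_linTerm hΩ hg0smooth hg0pos hgconv hb0smooth hbconv a
      (hKΩ hx)).eventually_lt_const (lt_add_one _)
    obtain ⟨p, hp, s, hs, h⟩ := eventually_prod_iff.1 (h1.and h2)
    exact ⟨{y | s y}, mem_nhdsWithin_of_mem_nhds hs, _, half_pos hq, _,
      hp.mono fun n hn y hy => h hn hy⟩

end Limits

/-- One exponent `lam` makes the barrier a strict subsolution whenever `quadTerm > θ` and
`linTerm < T`: the term quadratic in `lam` dominates. -/
theorem exists_barrier_exponent {c θ T : ℝ} (hc : 0 < c) (hθ : 0 < θ) :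
    ∃ lam > 0, ∀ q t : ℝ, θ < q → t < T → 0 < 4 * lam ^ 2 * q - 2 * lam * t - c := by
  obtain ⟨lam, h1, h2⟩ : ∃ lam : ℝ, 1 ≤ lam ∧ |T| + c ≤ lam * θ := by
    refine ⟨(|T| + c) / θ + 1, ?_, ?_⟩
    · have : 0 ≤ (|T| + c) / θ := by positivity
      linarith
    · rw [add_mul, div_mul_cancel₀ _ hθ.ne']
      linarith
  refine ⟨lam, by linarith, fun q t hq ht => ?_⟩
  have h3 : |T| + c ≤ lam * q := h2.trans (by gcongr)
  have h4 : t < |T| := ht.trans_le (le_abs_self T)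
  have h5 : 0 ≤ |T| := abs_nonneg T
  nlinarith [mul_le_mul_of_nonneg_left h3 (by linarith : (0 : ℝ) ≤ lam)]

end MaximumPrinciple

/-! ### Openness of the zero set -/

/-- maximum principle: Let `Ω ⊆ ℝ^k` be connected and open, let `g_n` be
smooth Riemannian metrics on `Ω` converging smoothly to `g_0`, `b_n` smooth vector fields
converging smoothly to `b_0`, and `c, α > 0`. For `n ∈ ℕ` let `f_n : Ω → (0, ∞)` be smooth
positive functions satisfying `Δ_n f_n^α + ⟨b_n, d f_n^α⟩ - c f_n^α ≤ 0` on `Ω`, and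
suppose `f_n → f_0 : Ω → [0, ∞)` smoothly over `Ω`. If `f_0 p = 0` for some `p ∈ Ω`, then
`f_0` vanishes identically on `Ω`. -/
theorem stmt_15 (k : ℕ) (Ω : Set (Fin k → ℝ)) (hΩo : IsOpen Ω) (hΩc : IsConnected Ω)
    (g : ℕ → (Fin k → ℝ) → Matrix (Fin k) (Fin k) ℝ)
    (g0 : (Fin k → ℝ) → Matrix (Fin k) (Fin k) ℝ)
    (hgsmooth : ∀ n i j, ContDiffOn ℝ (⊤ : ℕ∞) (fun x => g n x i j) Ω)
    (hg0smooth : ∀ i j, ContDiffOn ℝ (⊤ : ℕ∞) (fun x => g0 x i j) Ω)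
    (hgpos : ∀ n, ∀ x ∈ Ω, (g n x).PosDef)
    (hg0pos : ∀ x ∈ Ω, (g0 x).PosDef)
    (hgconv : ∀ i j, SmoothConvOn Ω (fun n x => g n x i j) (fun x => g0 x i j))
    (b : ℕ → (Fin k → ℝ) → (Fin k → ℝ)) (b0 : (Fin k → ℝ) → (Fin k → ℝ))
    (hbsmooth : ∀ n i, ContDiffOn ℝ (⊤ : ℕ∞) (fun x => b n x i) Ω)
    (hb0smooth : ∀ i, ContDiffOn ℝ (⊤ : ℕ∞) (fun x => b0 x i) Ω)
    (hbconv : ∀ i, SmoothConvOn Ω (fun n x => b n x i) (fun x => b0 x i))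
    (c α : ℝ) (hc : 0 < c) (hα : 0 < α)
    (f : ℕ → (Fin k → ℝ) → ℝ) (f0 : (Fin k → ℝ) → ℝ)
    (hfsmooth : ∀ n, ContDiffOn ℝ (⊤ : ℕ∞) (f n) Ω)
    (hfpos : ∀ n, ∀ x ∈ Ω, 0 < f n x)
    (hineq : ∀ n, ∀ x ∈ Ω,
      laplacianOf (g n) (fun y => f n y ^ α) x
        + fderiv ℝ (fun y => f n y ^ α) x (b n x)
        - c * f n x ^ α ≤ 0)
    (hfconv : SmoothConvOn Ω f f0)
    (hf0nonneg : ∀ x ∈ Ω, 0 ≤ f0 x)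
    (p : Fin k → ℝ) (hp : p ∈ Ω) (hf0p : f0 p = 0) :
    ∀ x ∈ Ω, f0 x = 0 := by
  have hf0c : ContinuousOn f0 Ω :=
    (hfconv []).continuousOn (Eventually.of_forall fun n => (hfsmooth n).continuousOn).frequently
  have hsmooth : ∀ n, ∀ x ∈ Ω, ContDiffAt ℝ 2 (fun y => f n y ^ α) x := fun n x hx =>
    (((hfsmooth n).contDiffAt (hΩo.mem_nhds hx)).of_le
      (WithTop.coe_le_coe.2 (le_top : (2 : ℕ∞) ≤ ⊤))).rpow_const_of_ne (ne_of_gt (hfpos n x hx))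
  -- If `f0 a > 0` for some `a` close to `x₀`, the barrier centred at `a` bounds `f n x₀` below
  -- by a positive constant independent of `n`.
  have key : ∀ x₀ ∈ Ω, f0 x₀ = 0 → ∀ᶠ a in nhds x₀, f0 a = 0 := by
    intro x₀ hx₀ hfx₀
    -- The factor `k + 1` compensates for the comparison of the sup norm with the Euclidean one, so
    -- that `x₀` lies in the Euclidean ball of radius `R` about `a`.
    obtain ⟨R', hR', hball⟩ := Metric.nhds_basis_closedBall.mem_iff.1 (hΩo.mem_nhds hx₀)
    set R := R' / 2 with hRdef
    have hR : 0 < R := half_pos hR'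
    filter_upwards [Metric.ball_mem_nhds x₀ (show 0 < R / (k + 1) by positivity)] with a ha
    rw [Metric.mem_ball, lt_div_iff₀ (by positivity)] at ha
    have hk : (0 : ℝ) ≤ k := k.cast_nonneg
    have hdist : dist a x₀ ≤ R := by nlinarith [dist_nonneg (x := a) (y := x₀)]
    have hx₀a : sqDist a x₀ < R ^ 2 := by
      refine (sqDist_le_mul_sq_dist a x₀).trans_lt ?_
      rw [dist_comm]
      calc (k : ℝ) * dist a x₀ ^ 2 ≤ (dist a x₀ * (k + 1)) ^ 2 := by
            rw [mul_pow, mul_comm]; gcongr; nlinarith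
        _ < R ^ 2 := by gcongr
    have hsub : {y | sqDist a y ≤ R ^ 2} ⊆ Ω := fun y hy => hball <| by
      have := dist_le_of_sqDist_le hR.le hy
      rw [Metric.mem_closedBall]
      linarith [dist_triangle y a x₀]
    have haΩ : a ∈ Ω := hsub (by simpa [sqDist] using sq_nonneg R)
    by_contra hne
    have hfa : 0 < f0 a := lt_of_le_of_ne (hf0nonneg a haΩ) (Ne.symm hne)
    -- A uniform positive lower bound for `f n` near the centre `a`.
    have hev := (hfconv.tendsto_prod hΩo hf0c haΩ).eventually_const_lt (half_lt_self hfa)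
    obtain ⟨P, hP, S, hS, hPS⟩ := eventually_prod_iff.1 hev
    obtain ⟨ρ, hρ, hρS⟩ := Metric.nhds_basis_ball.mem_iff.1 hS
    set δ := f0 a / 2 with hδ
    have hδpos : 0 < δ := half_pos hfa
    have hinner : ∀ᶠ n in atTop, ∀ x ∈ Ω, sqDist a x < ρ ^ 2 → δ ^ α ≤ f n x ^ α := by
      filter_upwards [hP] with n hn x _ hx
      have hxρ : dist x a < ρ :=
        lt_of_pow_lt_pow_left₀ 2 hρ.le ((sq_dist_le_sqDist a x).trans_lt hx)
      have hlt : δ < f n x := hPS hn (hρS hxρ)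
      exact Real.rpow_le_rpow hδpos.le hlt.le hα.le
    have hKc : IsCompact ({y | sqDist a y ≤ R ^ 2} ∩ {y | ρ ^ 2 ≤ sqDist a y}) :=
      (isCompact_sqDist_le a hR.le).inter_right
        (isClosed_le continuous_const (contDiff_sqDist a).continuous)
    have haK : a ∉ {y | sqDist a y ≤ R ^ 2} ∩ {y | ρ ^ 2 ≤ sqDist a y} := fun h => by
      have h2 : ρ ^ 2 ≤ sqDist a a := h.2
      have h3 : sqDist a a = 0 := by simp [sqDist]
      have : 0 < ρ ^ 2 := by positivity
      linarith
    obtain ⟨θ, hθ, T, hT⟩ := exists_uniform_bounds hΩo hg0smooth hg0pos hgconv hb0smooth hbconv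
      hKc (Set.inter_subset_left.trans hsub) haK
    obtain ⟨lam, hlam, hbar⟩ := exists_barrier_exponent (T := T) hc hθ
    set ψ := barrier (δ ^ α) lam (Real.exp (-lam * R ^ 2)) a with hψ
    have hψx₀ : 0 < ψ x₀ := by
      refine mul_pos (Real.rpow_pos_of_pos hδpos α) (sub_pos.2 (Real.exp_lt_exp.2 ?_))
      nlinarith
    have hge : ∀ᶠ n in atTop, ψ x₀ ≤ f n x₀ ^ α := by
      filter_upwards [hinner, hT] with n hn₁ hn₂
      exact barrier_le_of_supersolution (g := g n) (b := b n) (u := fun y => f n y ^ α)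
        hc (Real.rpow_pos_of_pos hδpos α) hlam hR.le hsub
        (hgpos n) (hsmooth n) (fun x hx => Real.rpow_pos_of_pos (hfpos n x hx) α) (hineq n) hn₁
        (fun x h1 h2 => hbar _ _ (hn₂ x ⟨h2, h1⟩).1 (hn₂ x ⟨h2, h1⟩).2) hx₀a.le
    have hlim : Tendsto (fun n => f n x₀ ^ α) atTop (nhds (f0 x₀ ^ α)) :=
      ((hfconv []).tendsto_at hx₀).rpow_const (Or.inr hα.le)
    have := ge_of_tendsto hlim hge
    rw [hfx₀, Real.zero_rpow hα.ne'] at this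
    linarith
  have hsubset : Ω ⊆ interior {x | f0 x = 0} := by
    refine hΩc.isPreconnected.subset_of_closure_inter_subset isOpen_interior
      ⟨p, hp, mem_interior_iff_mem_nhds.2 (key p hp hf0p)⟩ ?_
    rintro x ⟨hxc, hxΩ⟩
    refine mem_interior_iff_mem_nhds.2 (key x hxΩ ?_)
    have : (nhdsWithin x (interior {x | f0 x = 0})).NeBot := mem_closure_iff_nhdsWithin_neBot.1 hxc
    have h1 : Tendsto f0 (nhdsWithin x (interior {x | f0 x = 0})) (nhds (f0 x)) :=
      ((hf0c.continuousAt (hΩo.mem_nhds hxΩ)).tendsto).mono_left nhdsWithin_le_nhds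
    refine tendsto_nhds_unique h1 (tendsto_const_nhds.congr' ?_)
    filter_upwards [self_mem_nhdsWithin] with y hy
    have hmem : y ∈ {x | f0 x = 0} := interior_subset hy
    exact Eq.symm hmem
  intro x hx
  have hmem : x ∈ {x | f0 x = 0} := interior_subset (hsubset hx)
  exact hmem
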